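/- Let C be an entropy space and λ : C → C an isomorphism. Then for every α ∈ C, h(λ, α) = lim_{n→∞} (1/(2n+1))·h(α_{-n}^n), where α_{-n}^n = λ^{-n}α ∧ λ^{-n+1}α ∧ ⋯ ∧ λ^{n}α. -/

import Mathlib

open Filter ENNReal Topology

/-- An *entropy space*: a pre-ordered semigroup `(C, ≺, ∧)` satisfying (C1) and (C2),
together with an entropy function `h : C → [0,∞]` satisfying (H1) and (H2). -/
structure EntropySpace (C : Type*) where
  prec : C → C → Prop
  meet : C → C → C
  h : C → ℝ≥0∞
  prec_refl : ∀ a, prec a a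
  prec_trans : ∀ a b c, prec a b → prec b c → prec a c
  meet_assoc : ∀ a b c, meet (meet a b) c = meet a (meet b c)
  c1_left : ∀ a b, prec (meet a b) a
  c1_right : ∀ a b, prec (meet a b) b
  c2 : ∀ a a' b b', prec a a' → prec b b' → prec (meet a b) (meet a' b')
  h1 : ∀ a b, prec a b → h b ≤ h a
  h2 : ∀ a b, h (meet a b) ≤ h a + h b

variable {C : Type*}

/-- `α_0^n[λ] = α ∧ λα ∧ ⋯ ∧ λ^n α` (a product of `n + 1` factors). -/
def EntropySpace.orbitProd (E : EntropySpace C) (l : C → C) (a : C) : ℕ → C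
  | 0 => a
  | n + 1 => E.meet (E.orbitProd l a n) (l^[n + 1] a)

/-- `h(λ, α) = limsup_{n → ∞} (1/n) · h(α_0^{n-1}[λ])`, computed in `[0,∞]`. -/
noncomputable def EntropySpace.relEntropy (E : EntropySpace C) (l : C → C) (a : C) : ℝ≥0∞ :=
  Filter.atTop.limsup fun n : ℕ => E.h (E.orbitProd l a n) / ((n : ℝ≥0∞) + 1)

/-- `h(λ) = sup_{α ∈ C} h(λ, α)`. -/
noncomputable def EntropySpace.entropy (E : EntropySpace C) (l : C → C) : ℝ≥0∞ :=
  ⨆ a : C, E.relEntropy l a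

/-- `λ^k α` for `k ∈ ℤ`, where `li = λ⁻¹`. -/
def zpIter (l li : C → C) (k : ℤ) (a : C) : C :=
  if 0 ≤ k then l^[k.toNat] a else li^[(-k).toNat] a

/-- `α_{-n}^n = λ^{-n}α ∧ λ^{-n+1}α ∧ ⋯ ∧ λ^n α` (a product of `2n + 1` factors). -/
noncomputable def EntropySpace.biProd (E : EntropySpace C) (l li : C → C) (a : C) (n : ℕ) : C :=
  (List.range (2 * n)).foldl
    (fun c j => E.meet c (zpIter l li (-(n : ℤ) + j + 1) a))
    (zpIter l li (-(n : ℤ)) a)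

/-!
Subadditivity of `n ↦ h (α_0^{n-1})` makes the limsup defining `h(λ, α)` a limit, by Fekete's lemma;
if `h α = ∞`, every term is infinite. As `λ^n (λ^{j-n} α) = λ^j α`, applying `λ^n` to `α_{-n}^n`
yields `α_0^{2n}` up to `∼` without changing `h`, so the two-sided sequence is the even-indexed
subsequence of the one-sided one.
-/

section Fekete

variable {u : ℕ → ℝ≥0∞}

theorem exists_tendsto_div_natCast_of_subadditive (hfin : ∀ n, u n ≠ ⊤)
    (hadd : ∀ m n, u (m + n) ≤ u m + u n) :
    ∃ L, Tendsto (fun n : ℕ => u n / n) atTop (𝓝 L) := by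
  have hsub : Subadditive fun n => (u n).toReal := fun m n => by
    rw [← ENNReal.toReal_add (hfin m) (hfin n)]
    exact ENNReal.toReal_mono (ENNReal.add_ne_top.2 ⟨hfin m, hfin n⟩) (hadd m n)
  have hbdd : BddBelow (Set.range fun n : ℕ => (u n).toReal / n) :=
    ⟨0, Set.forall_mem_range.2 fun _ => by positivity⟩
  refine ⟨ENNReal.ofReal hsub.lim, (ENNReal.tendsto_ofReal (hsub.tendsto_lim hbdd)).congr' ?_⟩
  filter_upwards [eventually_gt_atTop 0] with n hn
  rw [ENNReal.ofReal_div_of_pos (by positivity), ENNReal.ofReal_toReal (hfin n),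
    ENNReal.ofReal_natCast]

theorem exists_tendsto_div_natCast_of_monotone_of_subadditive (hu : Monotone u)
    (hadd : ∀ m n, u (m + n) ≤ u m + u n) :
    ∃ L, Tendsto (fun n : ℕ => u n / n) atTop (𝓝 L) := by
  by_cases h1 : u 1 = ⊤
  · refine ⟨⊤, tendsto_const_nhds.congr' ?_⟩
    filter_upwards [eventually_ge_atTop 1] with n hn
    have hn_top : u n = ⊤ := top_le_iff.1 (h1.ge.trans (hu hn))
    rw [hn_top, ENNReal.top_div_of_ne_top (ENNReal.natCast_ne_top n)]
  · refine exists_tendsto_div_natCast_of_subadditive (fun n => ?_) hadd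
    induction n with
    | zero => exact ne_top_of_le_ne_top h1 (hu zero_le_one)
    | succ n ih => exact ne_top_of_le_ne_top (ENNReal.add_ne_top.2 ⟨ih, h1⟩) (hadd n 1)

end Fekete

theorem iterate_zpIter {l li : C → C} (hli : Function.RightInverse li l) (n j : ℕ) (a : C) :
    l^[n] (zpIter l li (-n + j) a) = l^[j] a := by
  unfold zpIter
  split_ifs with h
  · obtain ⟨k, rfl⟩ : ∃ k, j = n + k := ⟨j - n, by lia⟩
    rw [show (-(n : ℤ) + (n + k : ℕ)).toNat = k by lia, ← Function.iterate_add_apply]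
  · obtain ⟨k, rfl⟩ : ∃ k, n = j + k := ⟨n - j, by lia⟩
    rw [show (-(-((j + k : ℕ) : ℤ) + j)).toNat = k by lia, Function.iterate_add_apply,
      hli.iterate k]

namespace EntropySpace

/-- A homomorphism of an entropy space into itself: a map that is monotone for `≺` and satisfies
(M1) and (M2). The relation `α ∼ β` is encoded as `AntisymmRel E.prec α β`. -/
structure IsHom (E : EntropySpace C) (l : C → C) : Prop where
  prec_map : ∀ a b, E.prec a b → E.prec (l a) (l b)
  map_meet : ∀ a b, AntisymmRel E.prec (l (E.meet a b)) (E.meet (l a) (l b))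
  h_map : ∀ a, E.h (l a) = E.h a

variable {E : EntropySpace C} {l li : C → C}

instance (E : EntropySpace C) : IsPreorder C E.prec where
  refl := E.prec_refl
  trans := E.prec_trans

theorem h_congr {a b : C} (hab : AntisymmRel E.prec a b) : E.h a = E.h b :=
  le_antisymm (E.h1 _ _ hab.2) (E.h1 _ _ hab.1)

theorem meet_congr {a a' b b' : C} (ha : AntisymmRel E.prec a a') (hb : AntisymmRel E.prec b b') :
    AntisymmRel E.prec (E.meet a b) (E.meet a' b') :=
  ⟨E.c2 _ _ _ _ ha.1 hb.1, E.c2 _ _ _ _ ha.2 hb.2⟩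

theorem monotone_h_orbitProd (E : EntropySpace C) (l : C → C) (a : C) :
    Monotone fun n => E.h (E.orbitProd l a n) :=
  monotone_nat_of_le_succ fun _ => E.h1 _ _ (E.c1_left _ _)

theorem orbitProd_eq_foldl (E : EntropySpace C) (l : C → C) (a : C) (n : ℕ) :
    E.orbitProd l a n = (List.range n).foldl (fun c j => E.meet c (l^[j + 1] a)) a := by
  induction n with
  | zero => rfl
  | succ n ih =>
    rw [List.range_succ, List.foldl_append, List.foldl_cons, List.foldl_nil, ← ih, orbitProd]

-- The fold in `biProd` elaborates over the list `[0, …, 2n - 1]` coerced to `List ℤ`.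
theorem biProd_eq_foldl (E : EntropySpace C) (l li : C → C) (a : C) (n : ℕ) :
    E.biProd l li a n = (List.range (2 * n)).foldl
      (fun c j => E.meet c (zpIter l li (-n + (j + 1 : ℕ)) a)) (zpIter l li (-n) a) := by
  simp only [biProd, List.bind_eq_flatMap, List.pure_def, ← List.map_eq_flatMap, List.foldl_map,
    Nat.cast_add, Nat.cast_one, add_assoc]

namespace IsHom

theorem comp {l' : C → C} (hl : E.IsHom l) (hl' : E.IsHom l') : E.IsHom (l ∘ l') where
  prec_map a b hab := hl.prec_map _ _ (hl'.prec_map a b hab)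
  map_meet a b :=
    AntisymmRel.trans ⟨hl.prec_map _ _ (hl'.map_meet a b).1, hl.prec_map _ _ (hl'.map_meet a b).2⟩
      (hl.map_meet _ _)
  h_map a := (hl.h_map _).trans (hl'.h_map a)

theorem iterate (hl : E.IsHom l) (n : ℕ) : E.IsHom l^[n] := by
  induction n with
  | zero => exact ⟨fun _ _ => id, fun _ _ => .rfl, fun _ => rfl⟩
  | succ n ih => exact ih.comp hl

theorem orbitProd_add (hl : E.IsHom l) (a : C) (m n : ℕ) :
    AntisymmRel E.prec (E.orbitProd l a (m + 1 + n))
      (E.meet (E.orbitProd l a m) (l^[m + 1] (E.orbitProd l a n))) := by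
  induction n with
  | zero => exact .rfl
  | succ n ih =>
    have hlast : l^[m + 1 + (n + 1)] a = l^[m + 1] (l^[n + 1] a) :=
      Function.iterate_add_apply l (m + 1) (n + 1) a
    refine (meet_congr ih (.of_eq hlast)).trans ?_
    rw [E.meet_assoc]
    exact meet_congr .rfl ((hl.iterate (m + 1)).map_meet _ _).symm

theorem h_orbitProd_add_le (hl : E.IsHom l) (a : C) (m n : ℕ) :
    E.h (E.orbitProd l a (m + 1 + n)) ≤ E.h (E.orbitProd l a m) + E.h (E.orbitProd l a n) :=
  calc E.h (E.orbitProd l a (m + 1 + n))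
      = E.h (E.meet (E.orbitProd l a m) (l^[m + 1] (E.orbitProd l a n))) :=
        h_congr (hl.orbitProd_add a m n)
    _ ≤ E.h (E.orbitProd l a m) + E.h (l^[m + 1] (E.orbitProd l a n)) := E.h2 _ _
    _ = E.h (E.orbitProd l a m) + E.h (E.orbitProd l a n) := by rw [(hl.iterate (m + 1)).h_map]

theorem tendsto_relEntropy (hl : E.IsHom l) (a : C) :
    Tendsto (fun n : ℕ => E.h (E.orbitProd l a n) / ((n : ℝ≥0∞) + 1)) atTop
      (𝓝 (E.relEntropy l a)) := by
  -- `u n = h (α_0^{n-1})` for `n ≥ 1`; the truncated subtraction gives the harmless `u 0 = h α`.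
  let u : ℕ → ℝ≥0∞ := fun n => E.h (E.orbitProd l a (n - 1))
  have hu : Monotone u := fun m n hmn => E.monotone_h_orbitProd l a (Nat.sub_le_sub_right hmn 1)
  have hadd : ∀ m n, u (m + n) ≤ u m + u n
    | 0, n => by rw [zero_add]; exact le_add_self
    | m, 0 => le_self_add
    | m + 1, n + 1 => hl.h_orbitProd_add_le a m n
  obtain ⟨L, hL⟩ := exists_tendsto_div_natCast_of_monotone_of_subadditive hu hadd
  have hlim : Tendsto (fun n : ℕ => E.h (E.orbitProd l a n) / ((n : ℝ≥0∞) + 1)) atTop (𝓝 L) := by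
    simpa only [Function.comp_def, u, Nat.add_sub_cancel, Nat.cast_add_one] using
      hL.comp (tendsto_add_atTop_nat 1)
  rwa [relEntropy, hlim.limsup_eq]

theorem iterate_biProd (hl : E.IsHom l) (hli : Function.RightInverse li l) (a : C) (n : ℕ) :
    AntisymmRel E.prec (l^[n] (E.biProd l li a n)) (E.orbitProd l a (2 * n)) := by
  rw [biProd_eq_foldl, orbitProd_eq_foldl]
  refine List.foldl_rel (r := fun c c' => AntisymmRel E.prec (l^[n] c) c') ?_ fun j _ c c' hc => ?_
  · exact .of_eq (by simpa using iterate_zpIter hli n 0 a)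
  · exact ((hl.iterate n).map_meet _ _).trans
      (meet_congr hc (.of_eq (iterate_zpIter hli n (j + 1) a)))

theorem h_biProd (hl : E.IsHom l) (hli : Function.RightInverse li l) (a : C) (n : ℕ) :
    E.h (E.biProd l li a n) = E.h (E.orbitProd l a (2 * n)) := by
  rw [← (hl.iterate n).h_map, h_congr (hl.iterate_biProd hli a n)]

end IsHom

end EntropySpace

theorem stmt_6_general {E : EntropySpace C} {l li : C → C} (hl : E.IsHom l)
    (hli : Function.RightInverse li l) (a : C) :
    Tendsto (fun n : ℕ => E.h (E.biProd l li a n) / ((2 * n + 1 : ℕ) : ℝ≥0∞)) atTop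
      (𝓝 (E.relEntropy l a)) := by
  have htwo : Tendsto (fun n : ℕ => 2 * n) atTop atTop :=
    tendsto_id.const_mul_atTop' two_pos
  refine ((hl.tendsto_relEntropy a).comp htwo).congr fun n => ?_
  rw [hl.h_biProd hli, Function.comp_apply, Nat.cast_add_one]

/-- If `λ` is an isomorphism (with inverse `λ⁻¹ = li`), then
`h(λ, α) = lim_{n → ∞} (1/(2n+1)) · h(α_{-n}^n)`. -/
theorem stmt_6 (E : EntropySpace C) (l li : C → C)
    (hinv₁ : Function.LeftInverse li l) (hinv₂ : Function.RightInverse li l)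
    (hmono : ∀ a b, E.prec a b → E.prec (l a) (l b))
    (hm1 : ∀ a b, E.prec (l (E.meet a b)) (E.meet (l a) (l b)) ∧
      E.prec (E.meet (l a) (l b)) (l (E.meet a b)))
    (hm2 : ∀ a, E.h (l a) = E.h a)
    (hmono' : ∀ a b, E.prec a b → E.prec (li a) (li b))
    (hm1' : ∀ a b, E.prec (li (E.meet a b)) (E.meet (li a) (li b)) ∧
      E.prec (E.meet (li a) (li b)) (li (E.meet a b)))
    (hm2' : ∀ a, E.h (li a) = E.h a)
    (a : C) :
    Tendsto (fun n : ℕ => E.h (E.biProd l li a n) / ((2 * n + 1 : ℕ) : ℝ≥0∞)) atTop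
      (𝓝 (E.relEntropy l a)) :=
  stmt_6_general ⟨hmono, hm1, hm2⟩ hinv₂ a
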